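/- Let K ⊂ X be a compact set such that H({x}) = 0 for every x ∈ K. Then H(K) = sup{ H(K_0) : K_0 ⊂ K is compact with H(K_0) < ∞ }. In particular, if H(K) = ∞ then for every 0 < M < ∞ there exists a compact subset K_0 ⊂ K with M < H(K_0) < ∞. -/

import Mathlib

open MeasureTheory Metric Set Filter Topology
open scoped ENNReal NNReal

noncomputable section

universe u

variable {X : Type u} [MetricSpace X] [MeasurableSpace X]

/-- The doubling condition: `0 < μ(B(x,2r)) ≤ C_d · μ(B(x,r)) < ∞` for every ball. -/
def IsDoubling (μ : Measure X) (Cd : ℝ≥0∞) : Prop :=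
  ∀ (x : X) (r : ℝ), 0 < r →
    0 < μ (ball x (2 * r)) ∧ μ (ball x (2 * r)) ≤ Cd * μ (ball x r) ∧
      Cd * μ (ball x r) < ⊤

/-- The codimension-one restricted Hausdorff content `H_R(A)`. -/
def codimHContent (μ : Measure X) (R : ℝ) (A : Set X) : ℝ≥0∞ :=
  ⨅ (c : ℕ → X × ℝ) (_ : A ⊆ ⋃ i, ball (c i).1 (c i).2) (_ : ∀ i, (c i).2 ≤ R),
    ∑' i, μ (ball (c i).1 (c i).2) / ENNReal.ofReal (c i).2

/-- The codimension-one Hausdorff measure `H(A) = lim_{R→0} H_R(A)`. -/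
def codimH (μ : Measure X) (A : Set X) : ℝ≥0∞ :=
  ⨆ (R : ℝ) (_ : 0 < R), codimHContent μ R A

/-- The restricted maximal function `M_R ν(x) = sup_{0<r≤R} r·ν(B(x,r))/μ(B(x,r))`. -/
def maximalFn (μ ν : Measure X) (R : ℝ) (x : X) : ℝ≥0∞ :=
  ⨆ (r : ℝ) (_ : 0 < r) (_ : r ≤ R),
    ENNReal.ofReal r * ν (ball x r) / μ (ball x r)

/-- `|s - t|` for extended-real numbers, interpreted as `∞` whenever at least one of
`s`, `t` is infinite. -/
def eAbsDiff (s t : EReal) : ℝ≥0∞ :=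
  if s = ⊤ ∨ s = ⊥ ∨ t = ⊤ ∨ t = ⊥ then ⊤
  else ENNReal.ofReal |s.toReal - t.toReal|

/-- `g` is an upper gradient of `u` in `Ω`: `g` is a nonnegative Borel function, and for every
nonconstant rectifiable curve `γ` in `Ω` (represented through its 1-Lipschitz (arc-length-type)
parametrizations on compact intervals) with endpoints `x,y` we have
`|u(x) - u(y)| ≤ ∫_γ g ds`. -/
def IsUpperGradientOn (g : X → ℝ≥0∞) (u : X → EReal) (Ω : Set X) : Prop :=
  Measurable g ∧
    ∀ (a b : ℝ), a ≤ b → ∀ γ : ℝ → X, LipschitzOnWith 1 γ (Set.Icc a b) →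
      (∀ t ∈ Set.Icc a b, γ t ∈ Ω) →
      (∃ s ∈ Set.Icc a b, γ s ≠ γ a) →
      eAbsDiff (u (γ a)) (u (γ b)) ≤ ∫⁻ t in Set.Icc a b, g (γ t)

/-- The Newtonian `N^{1,1}` (extended) norm:
`‖u‖_{N^{1,1}} = ‖u‖_{L¹} + inf ‖g‖_{L¹}` over upper gradients `g` of `u`. -/
def eN11 (μ : Measure X) (u : X → ℝ) : ℝ≥0∞ :=
  (∫⁻ x, ENNReal.ofReal |u x| ∂μ) +
    ⨅ (g : X → ℝ≥0∞) (_ : IsUpperGradientOn g (fun x => (u x : EReal)) Set.univ),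
      ∫⁻ x, g x ∂μ

/-- The 1-capacity `capa₁(A) = inf ‖u‖_{N^{1,1}(X)}` over `u ∈ N^{1,1}(X)` with `u ≥ 1` on `A`. -/
def capa1 (μ : Measure X) (A : Set X) : ℝ≥0∞ :=
  ⨅ (u : X → ℝ) (_ : ∀ x ∈ A, 1 ≤ u x), eN11 μ u

/-- The variational 1-capacity `rcapa₁(A,D) = inf ∫_X g_u dμ` over `u ∈ N^{1,1}(X)` with
`u ≥ 1` on `A` and `u = 0` on `X ∖ D`, and upper gradients `g_u` of `u`. -/
def rcapa1 (μ : Measure X) (A D : Set X) : ℝ≥0∞ :=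
  ⨅ (u : X → ℝ) (_ : eN11 μ u < ⊤) (_ : ∀ x ∈ A, 1 ≤ u x)
    (_ : ∀ x, x ∉ D → u x = 0)
    (g : X → ℝ≥0∞) (_ : IsUpperGradientOn g (fun x => (u x : EReal)) Set.univ),
    ∫⁻ x, g x ∂μ

/-- The `(1,1)`-Poincaré inequality:
`⨍_{B(x,r)} |u - u_{B(x,r)}| dμ ≤ C_P · r · ⨍_{B(x,λr)} g dμ`. -/
def PoincareIneq (μ : Measure X) (CP : ℝ≥0∞) (lam : ℝ) : Prop :=
  ∀ (x : X) (r : ℝ), 0 < r → ∀ (u : X → ℝ) (g : X → ℝ≥0∞),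
    LocallyIntegrable u μ →
    IsUpperGradientOn g (fun y => (u y : EReal)) Set.univ →
    (∫⁻ y in ball x r, ENNReal.ofReal |u y - ⨍ z in ball x r, u z ∂μ| ∂μ) / μ (ball x r)
      ≤ CP * ENNReal.ofReal r *
        ((∫⁻ y in ball x (lam * r), g y ∂μ) / μ (ball x (lam * r)))

/-- `A` is 1-thin at `x`:
`lim_{r→0} r · rcapa₁(A ∩ B(x,r), B(x,2r)) / μ(B(x,r)) = 0`. -/
def OneThin (μ : Measure X) (A : Set X) (x : X) : Prop :=
  Tendsto (fun r : ℝ =>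
      ENNReal.ofReal r * rcapa1 μ (A ∩ ball x r) (ball x (2 * r)) / μ (ball x r))
    (𝓝[>] 0) (𝓝 0)

/-- The 1-base `b₁ A`: the set of points where `A` is 1-thick (not 1-thin). -/
def OneBase (μ : Measure X) (A : Set X) : Set X := {x | ¬ OneThin μ A x}

/-- `U` is 1-finely open if `X ∖ U` is 1-thin at every point of `U`. -/
def OneFinelyOpen (μ : Measure X) (U : Set X) : Prop := ∀ x ∈ U, OneThin μ Uᶜ x

/-- `U` is 1-quasiopen if for every `ε > 0` there is an open `G` with `capa₁(G) < ε`
such that `U ∪ G` is open. -/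
def OneQuasiopen (μ : Measure X) (U : Set X) : Prop :=
  ∀ ε : ℝ, 0 < ε → ∃ G : Set X, IsOpen G ∧ capa1 μ G < ENNReal.ofReal ε ∧ IsOpen (U ∪ G)

/-- The 1-fine closure of `D`: the smallest 1-finely closed set containing `D`. -/
def OneFineClosure (μ : Measure X) (D : Set X) : Set X :=
  ⋂₀ {F : Set X | D ⊆ F ∧ OneFinelyOpen μ Fᶜ}

/-- `u` is Lipschitz in every open set compactly contained in `Ω`. -/
def LipschitzLocOn (u : X → ℝ) (Ω : Set X) : Prop :=
  ∀ Ω' : Set X, IsOpen Ω' → IsCompact (closure Ω') → closure Ω' ⊆ Ω →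
    ∃ K : ℝ≥0, LipschitzOnWith K u Ω'

/-- `v i → u` in `L¹_loc(Ω)`. -/
def TendstoL1Loc (μ : Measure X) (Ω : Set X) (v : ℕ → X → ℝ) (u : X → ℝ) : Prop :=
  ∀ K : Set X, K ⊆ Ω → IsCompact K →
    Tendsto (fun i => ∫⁻ x in K, ENNReal.ofReal |v i x - u x| ∂μ) atTop (𝓝 0)

/-- The total variation `‖Du‖(Ω)` of `u` in `Ω`. -/
def totalVar (μ : Measure X) (u : X → ℝ) (Ω : Set X) : ℝ≥0∞ :=
  ⨅ (v : ℕ → X → ℝ) (g : ℕ → X → ℝ≥0∞)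
    (_ : ∀ i, LipschitzLocOn (v i) Ω)
    (_ : ∀ i, IsUpperGradientOn (g i) (fun x => (v i x : EReal)) Ω)
    (_ : TendstoL1Loc μ Ω v u),
    liminf (fun i => ∫⁻ x in Ω, g i x ∂μ) atTop

/-- The (extended) BV norm `‖u‖_{BV(X)} = ‖u‖_{L¹(X)} + ‖Du‖(X)`. -/
def eBV (μ : Measure X) (u : X → ℝ) : ℝ≥0∞ :=
  (∫⁻ x, ENNReal.ofReal |u x| ∂μ) + totalVar μ u Set.univ

/-- `u ∈ BV(X)`: `u ∈ L¹(X)` and `‖Du‖(X) < ∞`. -/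
def MemBV (μ : Measure X) (u : X → ℝ) : Prop := eBV μ u < ⊤

/-- The BV-capacity `capa_BV(A) = inf ‖u‖_{BV(X)}` over `u ∈ BV(X)` with `u ≥ 1`
in a neighborhood of `A`. -/
def capaBV (μ : Measure X) (A : Set X) : ℝ≥0∞ :=
  ⨅ (u : X → ℝ) (_ : ∃ V : Set X, IsOpen V ∧ A ⊆ V ∧ ∀ x ∈ V, 1 ≤ u x), eBV μ u

/-- The lower approximate limit `u^∧(x)`. -/
def lowerApprox (μ : Measure X) (u : X → ℝ) (x : X) : EReal :=
  sSup ((fun s : ℝ => (s : EReal)) ''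
    {s | Tendsto (fun r : ℝ => μ (ball x r ∩ {y | u y < s}) / μ (ball x r)) (𝓝[>] 0) (𝓝 0)})

/-- The support of a (μ-a.e. defined) function `u`. -/
def suppOf (μ : Measure X) (u : X → ℝ) : Set X :=
  {x | ∀ r : ℝ, 0 < r → 0 < μ ({y | u y ≠ 0} ∩ ball x r)}

section TreeContent

/-- Finite content on a tree boundary. -/
def treeCyl {Ω ι : Type*} (p : ℕ → Ω → ι) (s : ℕ × ι) : Set Ω := {x | p s.1 x = s.2}

/-- The content of level `m` defined through finite coverings by cylinders. -/
def treeH {Ω ι : Type*} (p : ℕ → Ω → ι) (w : ℕ × ι → ℝ≥0∞) (m : ℕ) (A : Set Ω) : ℝ≥0∞ :=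
  ⨅ (S : Finset (ℕ × ι)) (_ : ∀ s ∈ S, m ≤ s.1) (_ : A ⊆ ⋃ s ∈ S, treeCyl p s), ∑ s ∈ S, w s

variable {Ω ι : Type*} {p : ℕ → Ω → ι} {w : ℕ × ι → ℝ≥0∞}

theorem treeH_le {m : ℕ} {A : Set Ω} (S : Finset (ℕ × ι)) (h1 : ∀ s ∈ S, m ≤ s.1)
    (h2 : A ⊆ ⋃ s ∈ S, treeCyl p s) : treeH p w m A ≤ ∑ s ∈ S, w s :=
  iInf_le_of_le S (iInf_le_of_le h1 (iInf_le_of_le h2 le_rfl))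

theorem le_treeH {m : ℕ} {A : Set Ω} {a : ℝ≥0∞}
    (h : ∀ S : Finset (ℕ × ι), (∀ s ∈ S, m ≤ s.1) → (A ⊆ ⋃ s ∈ S, treeCyl p s) →
      a ≤ ∑ s ∈ S, w s) : a ≤ treeH p w m A :=
  le_iInf fun S => le_iInf fun h1 => le_iInf fun h2 => h S h1 h2

theorem exists_of_treeH_lt {m : ℕ} {A : Set Ω} {a : ℝ≥0∞} (h : treeH p w m A < a) :
    ∃ S : Finset (ℕ × ι), (∀ s ∈ S, m ≤ s.1) ∧ (A ⊆ ⋃ s ∈ S, treeCyl p s) ∧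
      ∑ s ∈ S, w s < a := by
  by_contra! hc
  exact absurd h (not_lt.2 (le_treeH hc))

theorem treeH_mono {m : ℕ} {A B : Set Ω} (h : A ⊆ B) : treeH p w m A ≤ treeH p w m B :=
  le_treeH fun S h1 h2 => treeH_le S h1 (h.trans h2)

theorem treeH_mono_level {m n : ℕ} (hmn : m ≤ n) (A : Set Ω) :
    treeH p w m A ≤ treeH p w n A :=
  le_treeH fun S h1 h2 => treeH_le S (fun s hs => hmn.trans (h1 s hs)) h2

theorem treeH_empty (m : ℕ) : treeH p w m ∅ = 0 :=
  le_antisymm (by simpa using treeH_le (w := w) (p := p) (m := m) (A := ∅) ∅ (by simp) (by simp))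
    bot_le

theorem treeH_union (m : ℕ) (A B : Set Ω) :
    treeH p w m (A ∪ B) ≤ treeH p w m A + treeH p w m B := by
  classical
  refine ENNReal.le_of_forall_pos_le_add fun ε hε hfin => ?_
  have hε2 : (ε : ℝ≥0∞) / 2 ≠ 0 := by simpa using hε.ne'
  obtain ⟨S, a1, a2, a3⟩ := exists_of_treeH_lt
    (ENNReal.lt_add_right (ne_top_of_le_ne_top hfin.ne le_self_add) hε2 : treeH p w m A < _)
  obtain ⟨T, b1, b2, b3⟩ := exists_of_treeH_lt
    (ENNReal.lt_add_right (ne_top_of_le_ne_top hfin.ne le_add_self) hε2 : treeH p w m B < _)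
  have := treeH_le (p := p) (w := w) (m := m) (A := A ∪ B) (S ∪ T)
    (by intro s hs; rcases Finset.mem_union.1 hs with h | h; exacts [a1 s h, b1 s h])
    (by
      rw [Finset.set_biUnion_union]
      exact union_subset_union a2 b2)
  calc treeH p w m (A ∪ B) ≤ ∑ s ∈ S ∪ T, w s := this
    _ ≤ ∑ s ∈ S, w s + ∑ s ∈ T, w s := by
        rw [← Finset.sum_union_inter]; exact le_self_add
    _ ≤ _ := add_le_add a3.le b3.le
    _ = _ := by rw [add_add_add_comm, ENNReal.add_halves]

theorem treeH_biUnion {κ : Type*} (m : ℕ) (I : Finset κ) (A : κ → Set Ω) :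
    treeH p w m (⋃ i ∈ I, A i) ≤ ∑ i ∈ I, treeH p w m (A i) := by
  classical
  induction I using Finset.induction_on with
  | empty => simp [treeH_empty]
  | insert a s ha ih =>
    rw [Finset.set_biUnion_insert, Finset.sum_insert ha]
    exact (treeH_union _ _ _).trans (by gcongr)

theorem treeH_le_single {m k : ℕ} {i : ι} {A : Set Ω} (hmk : m ≤ k) (h : A ⊆ treeCyl p (k, i)) :
    treeH p w m A ≤ w (k, i) := by
  simpa using treeH_le (w := w) {(k, i)} (by simpa using hmk) (by simpa using h)

theorem treeH_succ_le {k : ℕ} {i : ι} {A : Set Ω} (h : A ⊆ treeCyl p (k, i))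
    (hlt : treeH p w k A < w (k, i)) : treeH p w (k + 1) A ≤ treeH p w k A := by
  classical
  refine le_of_forall_gt fun a ha => ?_
  obtain ⟨S, a1, a2, a3⟩ := exists_of_treeH_lt (lt_min hlt ha)
  have hS : (k, i) ∉ S := fun hS =>
    absurd (Finset.single_le_sum (f := w) (fun _ _ => bot_le) hS)
      (not_le.2 (a3.trans_le (min_le_left _ _)))
  refine (treeH_le (S.filter fun s => k + 1 ≤ s.1) (by simp) ?_).trans_lt
    ((Finset.sum_le_sum_of_subset (Finset.filter_subset _ _)).trans_lt
      (a3.trans_le (min_le_right _ _)))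
  intro x hx
  have h1 := a2 hx
  simp only [mem_iUnion] at h1 ⊢
  obtain ⟨s, hs, hxs⟩ := h1
  refine ⟨s, ?_, hxs⟩
  refine Finset.mem_filter.2 ⟨hs, ?_⟩
  rcases (a1 s hs).eq_or_lt with h2 | h2
  · exfalso
    obtain ⟨l, j⟩ := s
    simp only at h2
    subst h2
    have e1 : p k x = j := hxs
    have e2 : p k x = i := h hx
    rw [← e1, e2] at hs
    exact hS hs
  · exact h2

theorem tree_proj (hp : ∀ k x y, p (k + 1) x = p (k + 1) y → p k x = p k y) {k l : ℕ}
    (hkl : k ≤ l) {x y : Ω} (h : p l x = p l y) : p k x = p k y := by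
  induction l, hkl using Nat.le_induction with
  | base => exact h
  | succ l _ ih => exact ih (hp _ _ _ h)

theorem treeH_split (hp : ∀ k x y, p (k + 1) x = p (k + 1) y → p k x = p k y) (k : ℕ)
    (R : Finset ι) (A : Set Ω) :
    ∑ i ∈ R, treeH p w k (A ∩ treeCyl p (k, i)) ≤ treeH p w k A := by
  classical
  refine le_treeH fun S h1 h2 => ?_
  calc ∑ i ∈ R, treeH p w k (A ∩ treeCyl p (k, i))
      ≤ ∑ i ∈ R, ∑ s ∈ S.filter (fun s => (treeCyl p s ∩ treeCyl p (k, i)).Nonempty), w s := by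
        refine Finset.sum_le_sum fun i _ => treeH_le _ ?_ ?_
        · intro s hs
          exact h1 s (Finset.mem_filter.1 hs).1
        · rintro x ⟨hx, hxi⟩
          have h3 := h2 hx
          simp only [mem_iUnion] at h3 ⊢
          obtain ⟨s, hs, hxs⟩ := h3
          exact ⟨s, Finset.mem_filter.2 ⟨hs, x, hxs, hxi⟩, hxs⟩
    _ = ∑ i ∈ R, ∑ s ∈ S, if (treeCyl p s ∩ treeCyl p (k, i)).Nonempty then w s else 0 := by
        simp only [Finset.sum_filter]
    _ = ∑ s ∈ S, ∑ i ∈ R, if (treeCyl p s ∩ treeCyl p (k, i)).Nonempty then w s else 0 :=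
        Finset.sum_comm
    _ ≤ ∑ s ∈ S, w s := by
        refine Finset.sum_le_sum fun s hs => ?_
        by_cases hne : (treeCyl p s).Nonempty
        · obtain ⟨x, hx⟩ := hne
          calc ∑ i ∈ R, (if (treeCyl p s ∩ treeCyl p (k, i)).Nonempty then w s else 0)
              ≤ ∑ i ∈ R, if p k x = i then w s else 0 := by
                refine Finset.sum_le_sum fun i _ => ?_
                split_ifs with c1 c2
                · exact le_rfl
                · exfalso
                  obtain ⟨y, hy, hyi⟩ := c1
                  apply c2
                  have e : p s.1 x = p s.1 y := Eq.trans hx (Eq.symm hy)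
                  exact (tree_proj hp (h1 s hs) e).trans hyi
                · exact bot_le
                · exact le_rfl
            _ ≤ w s := by
                rw [Finset.sum_ite_eq]
                split_ifs <;> simp
        · rw [not_nonempty_iff_eq_empty.1 hne]
          simp

theorem treeH_le_split (k : ℕ) (R : Finset ι) (hR : ∀ x, p k x ∈ R) (m : ℕ) (A : Set Ω) :
    treeH p w m A ≤ ∑ i ∈ R, treeH p w m (A ∩ treeCyl p (k, i)) := by
  refine le_trans (treeH_mono ?_) (treeH_biUnion m R _)
  intro x hx
  simp only [mem_iUnion]
  exact ⟨p k x, hR x, hx, rfl⟩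

/-- Preservation of coarse contents. -/
theorem treeH_preserve (hp : ∀ k x y, p (k + 1) x = p (k + 1) y → p k x = p k y) {m k : ℕ}
    (hmk : m ≤ k) (R : Finset ι) (hR : ∀ x, p k x ∈ R) (F F' : Set Ω)
    (h : ∀ i, treeH p w k (F ∩ treeCyl p (k, i)) ≤ treeH p w k (F' ∩ treeCyl p (k, i))) :
    treeH p w m F ≤ treeH p w m F' := by
  classical
  refine le_treeH fun S h1 h2 => ?_
  set Sl := S.filter fun s => s.1 < k
  set Sh := S.filter fun s => ¬ s.1 < k
  set U : Set Ω := ⋃ s ∈ Sl, treeCyl p s with hU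
  have hsat : ∀ x y, p k x = p k y → x ∈ U → y ∈ U := by
    intro x y hxy hx
    simp only [hU, mem_iUnion] at hx ⊢
    obtain ⟨s, hs, hxs⟩ := hx
    refine ⟨s, hs, ?_⟩
    exact (tree_proj hp (Finset.mem_filter.1 hs).2.le hxy).symm.trans hxs
  have e1 : treeH p w m (F ∩ U) ≤ ∑ s ∈ Sl, w s :=
    treeH_le _ (fun s hs => h1 s (Finset.mem_filter.1 hs).1) inter_subset_right
  have e2 : treeH p w k (F' \ U) ≤ ∑ s ∈ Sh, w s := by
    refine treeH_le _ (fun s hs => not_lt.1 (Finset.mem_filter.1 hs).2) ?_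
    rintro x ⟨hx, hxU⟩
    have h3 := h2 hx
    simp only [hU, mem_iUnion] at h3 hxU ⊢
    obtain ⟨s, hs, hxs⟩ := h3
    refine ⟨s, Finset.mem_filter.2 ⟨hs, fun hlt => hxU ⟨s, Finset.mem_filter.2 ⟨hs, hlt⟩, hxs⟩⟩, hxs⟩
  have e3 : treeH p w k (F \ U) ≤ treeH p w k (F' \ U) := by
    refine (treeH_le_split k R hR k _).trans (le_trans ?_ (treeH_split hp k R _))
    refine Finset.sum_le_sum fun i _ => ?_
    by_cases hi : ∃ x ∈ U, p k x = i
    · obtain ⟨x, hx, hxi⟩ := hi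
      have : F \ U ∩ treeCyl p (k, i) = ∅ := by
        rw [eq_empty_iff_forall_notMem]
        rintro y ⟨⟨_, hy⟩, hyi⟩
        exact hy (hsat x y (hxi.trans (Eq.symm hyi)) hx)
      rw [this, treeH_empty]
      exact bot_le
    · push Not at hi
      have : ∀ G : Set Ω, G \ U ∩ treeCyl p (k, i) = G ∩ treeCyl p (k, i) := by
        intro G
        ext y
        constructor
        · rintro ⟨⟨a, _⟩, b⟩
          exact ⟨a, b⟩
        · rintro ⟨a, b⟩
          exact ⟨⟨a, fun hy => hi y hy b⟩, b⟩
      rw [this, this]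
      exact h i
  calc treeH p w m F ≤ treeH p w m (F ∩ U ∪ F \ U) := by rw [inter_union_sdiff]
    _ ≤ treeH p w m (F ∩ U) + treeH p w m (F \ U) := treeH_union _ _ _
    _ ≤ ∑ s ∈ Sl, w s + ∑ s ∈ Sh, w s :=
        add_le_add e1 ((treeH_mono_level hmk _).trans (e3.trans e2))
    _ = ∑ s ∈ S, w s := Finset.sum_filter_add_sum_filter_not _ _ _

theorem tree_isClopen [TopologicalSpace Ω] (hopen : ∀ k i, IsOpen {x | p k x = i}) (s : ℕ × ι) :
    IsClosed (treeCyl p s) := by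
  have : (treeCyl p s)ᶜ = ⋃ j ∈ {j | j ≠ s.2}, {x | p s.1 x = j} := by
    ext x
    simp [treeCyl]
  exact ⟨by rw [this]; exact isOpen_biUnion fun j _ => hopen _ _⟩

theorem tree_step [TopologicalSpace Ω] [CompactSpace Ω]
    (hp : ∀ k x y, p (k + 1) x = p (k + 1) y → p k x = p k y)
    (hopen : ∀ k i, IsOpen {x | p k x = i}) (hfin : ∀ k, (range (p k)).Finite)
    (hsmall : ∀ x, ∀ ε : ℝ≥0∞, 0 < ε → ∀ m, ∃ k ≥ m, w (k, p k x) < ε)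
    (k : ℕ) (F : Set Ω) (hF : IsClosed F) (δ : ℝ≥0∞) (hδ : 0 < δ) :
    ∃ F' ⊆ F, IsClosed F' ∧
      (∀ i, treeH p w k (F ∩ treeCyl p (k, i)) ≤ treeH p w k (F' ∩ treeCyl p (k, i))) ∧
      treeH p w (k + 1) F' ≤ treeH p w k F + δ := by
  classical
  set R := (hfin k).toFinset with hRdef
  have hR : ∀ x, p k x ∈ R := fun x => by simp [hRdef]
  set ε : ℝ≥0∞ := δ / (R.card + 1) with hεdef
  have hε : 0 < ε := ENNReal.div_pos hδ.ne' (by finiteness)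
  choose l hl hlw using fun x => hsmall x ε hε (k + 1)
  obtain ⟨t, ht⟩ := isCompact_univ.elim_finite_subcover (fun x => treeCyl p (l x, p (l x) x))
    (fun x => hopen _ _) (fun x _ => mem_iUnion.2 ⟨x, rfl⟩)
  set T : Finset (ℕ × ι) := t.image fun x => (l x, p (l x) x) with hT
  have hTlev : ∀ s ∈ T, k + 1 ≤ s.1 ∧ w s < ε := by
    intro s hs
    obtain ⟨x, _, rfl⟩ := Finset.mem_image.1 hs
    exact ⟨hl x, hlw x⟩
  have hTcov : ∀ x, ∃ s ∈ T, x ∈ treeCyl p s := by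
    intro x
    have := ht (mem_univ x)
    simp only [mem_iUnion] at this
    obtain ⟨y, hy, hxy⟩ := this
    exact ⟨_, Finset.mem_image_of_mem _ hy, hxy⟩
  let G : Finset (ℕ × ι) → Set Ω := fun T' => F \ ⋃ s ∈ T', treeCyl p s
  let good : Finset (ℕ × ι) → Prop := fun T' =>
    ∀ i, treeH p w k (F ∩ treeCyl p (k, i)) ≤ treeH p w k (G T' ∩ treeCyl p (k, i))
  have hne : (T.powerset.filter good).Nonempty :=
    ⟨∅, by simp [good, G]⟩
  obtain ⟨T', hT', hmax⟩ := Finset.exists_max_image _ Finset.card hne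
  rw [Finset.mem_filter, Finset.mem_powerset] at hT'
  obtain ⟨hTsub, hgood⟩ := hT'
  have hGF : G T' ⊆ F := sdiff_subset
  have hGins : ∀ s, G (insert s T') = G T' \ treeCyl p s := by
    intro s
    simp only [G, Finset.set_biUnion_insert]
    rw [union_comm, sdiff_sdiff]
  have hGcl : IsClosed (G T') :=
    hF.sdiff (isOpen_biUnion fun s _ => hopen _ _)
  refine ⟨G T', hGF, hGcl, hgood, ?_⟩
  have key : ∀ i, treeH p w (k + 1) (G T' ∩ treeCyl p (k, i)) ≤
      treeH p w k (G T' ∩ treeCyl p (k, i)) + ε := by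
    intro i
    rcases (G T' ∩ treeCyl p (k, i)).eq_empty_or_nonempty with he | ⟨x, hxG, hxi⟩
    · rw [he, treeH_empty]
      exact bot_le
    obtain ⟨s, hsT, hxs⟩ := hTcov x
    have hsT' : s ∉ T' := fun hs => hxG.2 (mem_biUnion hs hxs)
    have hbad : ¬ good (insert s T') := by
      intro hg
      have := hmax (insert s T') (Finset.mem_filter.2
        ⟨Finset.mem_powerset.2 (Finset.insert_subset hsT hTsub), hg⟩)
      rw [Finset.card_insert_of_notMem hsT'] at this
      omega
    simp only [good, not_forall, not_le] at hbad
    obtain ⟨j, hj⟩ := hbad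
    rw [hGins] at hj
    have hsub : treeCyl p s ⊆ treeCyl p (k, i) := by
      intro y hy
      have e : p s.1 y = p s.1 x := Eq.trans hy (Eq.symm hxs)
      exact (tree_proj hp (by have := (hTlev s hsT).1; omega) e).trans hxi
    have hji : j = i := by
      by_contra hji
      have : G T' \ treeCyl p s ∩ treeCyl p (k, j) = G T' ∩ treeCyl p (k, j) := by
        ext y
        constructor
        · rintro ⟨⟨a, _⟩, b⟩
          exact ⟨a, b⟩
        · rintro ⟨a, b⟩
          exact ⟨⟨a, fun hy => hji (Eq.trans (Eq.symm b) (hsub hy))⟩, b⟩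
      rw [this] at hj
      exact absurd (hgood j) (not_le.2 hj)
    subst hji
    have h4 := treeH_succ_le (inter_subset_right : G T' \ treeCyl p s ∩ treeCyl p (k, j) ⊆ _)
      (hj.trans_le (treeH_le_single le_rfl inter_subset_right))
    calc treeH p w (k + 1) (G T' ∩ treeCyl p (k, j))
        ≤ treeH p w (k + 1) ((G T' \ treeCyl p s ∩ treeCyl p (k, j)) ∪ treeCyl p s) := by
          apply treeH_mono
          rintro y ⟨a, b⟩
          by_cases hy : y ∈ treeCyl p s
          · exact Or.inr hy
          · exact Or.inl ⟨⟨a, hy⟩, b⟩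
      _ ≤ treeH p w (k + 1) (G T' \ treeCyl p s ∩ treeCyl p (k, j)) +
            treeH p w (k + 1) (treeCyl p s) := treeH_union _ _ _
      _ ≤ treeH p w k (G T' ∩ treeCyl p (k, j)) + ε := by
          refine add_le_add (h4.trans (treeH_mono ?_))
            ((treeH_le_single (hTlev s hsT).1 subset_rfl).trans (hTlev s hsT).2.le)
          exact inter_subset_inter_left _ sdiff_subset
  calc treeH p w (k + 1) (G T')
      ≤ ∑ i ∈ R, treeH p w (k + 1) (G T' ∩ treeCyl p (k, i)) := treeH_le_split k R hR _ _
    _ ≤ ∑ i ∈ R, (treeH p w k (G T' ∩ treeCyl p (k, i)) + ε) :=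
        Finset.sum_le_sum fun i _ => key i
    _ = ∑ i ∈ R, treeH p w k (G T' ∩ treeCyl p (k, i)) + R.card * ε := by
        rw [Finset.sum_add_distrib, Finset.sum_const, nsmul_eq_mul]
    _ ≤ treeH p w k F + δ := by
        refine add_le_add ((treeH_split hp k R _).trans (treeH_mono hGF)) ?_
        calc (R.card : ℝ≥0∞) * ε ≤ (R.card + 1) * (δ / (R.card + 1)) := by
              gcongr
              exact le_self_add
          _ ≤ δ := ENNReal.mul_div_le

theorem tree_main [TopologicalSpace Ω] [CompactSpace Ω]
    (hp : ∀ k x y, p (k + 1) x = p (k + 1) y → p k x = p k y)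
    (hopen : ∀ k i, IsOpen {x | p k x = i}) (hfin : ∀ k, (range (p k)).Finite)
    (hsmall : ∀ x, ∀ ε : ℝ≥0∞, 0 < ε → ∀ m, ∃ k ≥ m, w (k, p k x) < ε) (m : ℕ) :
    ∃ F : Set Ω, IsClosed F ∧ treeH p w m univ ≤ treeH p w m F ∧
      ∀ k, treeH p w k F ≤ treeH p w m univ + 1 := by
  obtain ⟨δ, hδ, hδsum⟩ := ENNReal.exists_pos_sum_of_countable' (one_ne_zero : (1 : ℝ≥0∞) ≠ 0) ℕ
  choose! f hfsub hfcl hfpres hfle using fun (j : ℕ) (F : Set Ω) (hF : IsClosed F) =>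
    tree_step hp hopen hfin hsmall (m + j) F hF (δ j) (hδ j)
  let F : ℕ → Set Ω := fun j => Nat.rec univ (fun j G => f j G) j
  have hF0 : F 0 = univ := rfl
  have hFs : ∀ j, F (j + 1) = f j (F j) := fun j => rfl
  have hFcl : ∀ j, IsClosed (F j) := by
    intro j
    induction j with
    | zero => exact isClosed_univ
    | succ j ih => rw [hFs]; exact hfcl j _ ih
  have hFsub : ∀ j, F (j + 1) ⊆ F j := fun j => hfsub j _ (hFcl j)
  have hanti : Antitone F := antitone_nat_of_succ_le hFsub
  have hlow : ∀ j, treeH p w m univ ≤ treeH p w m (F j) := by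
    intro j
    induction j with
    | zero => exact le_rfl
    | succ j ih =>
      refine ih.trans ?_
      refine treeH_preserve hp (Nat.le_add_right m j) (hfin (m + j)).toFinset (by simp) _ _ ?_
      exact hfpres j _ (hFcl j)
  have hup : ∀ j, treeH p w (m + j) (F j) ≤ treeH p w m univ + ∑ i ∈ Finset.range j, δ i := by
    intro j
    induction j with
    | zero => simp [hF0]
    | succ j ih =>
      rw [Finset.sum_range_succ]
      exact (hfle j _ (hFcl j)).trans ((add_le_add ih le_rfl).trans (add_assoc _ _ _).le)
  refine ⟨⋂ j, F j, isClosed_iInter hFcl, ?_, ?_⟩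
  · refine le_treeH fun S h1 h2 => ?_
    have hO : IsOpen (⋃ s ∈ S, treeCyl p s) := isOpen_biUnion fun s _ => hopen _ _
    obtain ⟨j, hj⟩ := exists_subset_nhds_of_isCompact' hanti.directed_ge
      (fun j => (hFcl j).isCompact) hFcl (fun x hx => hO.mem_nhds (h2 hx))
    exact (hlow j).trans (treeH_le S h1 hj)
  · intro k
    calc treeH p w k (⋂ j, F j) ≤ treeH p w (m + k) (F k) :=
          (treeH_mono_level (Nat.le_add_left k m) _).trans (treeH_mono (iInter_subset _ _))
      _ ≤ treeH p w m univ + ∑ i ∈ Finset.range k, δ i := hup k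
      _ ≤ treeH p w m univ + 1 := by
          gcongr
          exact (ENNReal.sum_le_tsum _).trans hδsum.le

end TreeContent

section Coding

theorem exists_net_of_isCompact {X : Type u} [MetricSpace X] {K : Set X} (hK : IsCompact K)
    {ε : ℝ} (hε : 0 < ε) :
    ∃ N ⊆ K, N.Finite ∧ (∀ x ∈ N, ∀ y ∈ N, x ≠ y → ε ≤ dist x y) ∧
      ∀ x ∈ K, ∃ y ∈ N, dist x y ≤ ε := by
  lift ε to ℝ≥0 using hε.le
  have hε' : ε / 2 ≠ 0 := by
    have : ε ≠ 0 := by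
      rintro rfl
      simp at hε
    positivity
  have hpack : packingNumber ε K ≠ ⊤ := by
    obtain ⟨N, hNK, hNfin, hN⟩ := exists_finite_isCover_of_isCompact hε' hK
    have h1 := packingNumber_two_mul_le_externalCoveringNumber (ε / 2) K
    rw [mul_div_cancel₀ _ two_ne_zero] at h1
    have h2 := (externalCoveringNumber_le_coveringNumber (ε / 2) K).trans
      (hN.coveringNumber_le_encard hNK)
    exact ne_top_of_le_ne_top (Set.encard_ne_top_iff.2 hNfin) (h1.trans h2)
  refine ⟨maximalSeparatedSet ε K, maximalSeparatedSet_subset, ?_, ?_, ?_⟩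
  · rw [← Set.encard_ne_top_iff, encard_maximalSeparatedSet hpack]
    exact hpack
  · intro x hx y hy hxy
    have h := isSeparated_maximalSeparatedSet (ε := ε) (A := K) hx hy hxy
    have h' : (ε : ℝ≥0∞) < edist x y := h
    rw [edist_nndist, ENNReal.coe_lt_coe] at h'
    exact_mod_cast h'.le
  · intro x hx
    obtain ⟨y, hy, hxy⟩ := isCover_maximalSeparatedSet hpack hx
    refine ⟨y, hy, ?_⟩
    have h' : edist x y ≤ (ε : ℝ≥0∞) := hxy
    rw [edist_nndist, ENNReal.coe_le_coe] at h'
    exact_mod_cast h'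

theorem exists_coding {X : Type u} [MetricSpace X] [CompleteSpace X] {K : Set X}
    (hK : IsCompact K) :
    ∃ (Ω : Type u) (_ : TopologicalSpace Ω) (_ : CompactSpace Ω) (p : ℕ → Ω → X) (π : Ω → X),
      Continuous π ∧ range π = K ∧
      (∀ k x y, p (k + 1) x = p (k + 1) y → p k x = p k y) ∧
      (∀ k i, IsOpen {x | p k x = i}) ∧ (∀ k, (range (p k)).Finite) ∧
      (∀ k x, dist (p k x) (π x) ≤ 2 / 2 ^ k) ∧
      (∀ k, ∀ a ∈ range (p k), ∀ b ∈ range (p k), a ≠ b → 1 / 2 ^ k ≤ dist a b) := by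
  choose N hNK hNfin hNsep hNcov using fun k : ℕ =>
    exists_net_of_isCompact hK (show (0 : ℝ) < 1 / 2 ^ k by positivity)
  have hpar : ∀ k, ∀ a : N (k + 1), ∃ b : N k, dist (a : X) b ≤ 1 / 2 ^ k := by
    intro k a
    obtain ⟨y, hy, h⟩ := hNcov k a (hNK _ a.2)
    exact ⟨⟨y, hy⟩, h⟩
  choose par hpar using hpar
  have hF : ∀ k, Finite (N k) := fun k => (hNfin k).to_subtype
  let Ω : Set (∀ k, N k) := {ω | ∀ k, par k (ω (k + 1)) = ω k}
  have hΩcl : IsClosed Ω := by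
    have : Ω = ⋂ k, {ω | par k (ω (k + 1)) = ω k} := by
      ext ω
      simp [Ω]
    rw [this]
    refine isClosed_iInter fun k => isClosed_eq ?_ (continuous_apply k)
    exact continuous_of_discreteTopology.comp (continuous_apply (k + 1))
  have hΩc : CompactSpace Ω := isCompact_iff_compactSpace.1 hΩcl.isCompact
  have hstep : ∀ ω : Ω, ∀ k, dist ((ω.1 k : X)) (ω.1 (k + 1) : X) ≤ 2 / 2 / 2 ^ k := by
    intro ω k
    have h1 := hpar k (ω.1 (k + 1))
    rw [ω.2 k, dist_comm] at h1
    simpa using h1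
  have hlim : ∀ ω : Ω, ∃ a : X, Tendsto (fun k => (ω.1 k : X)) atTop (𝓝 a) := fun ω =>
    cauchySeq_tendsto_of_complete (cauchySeq_of_le_geometric_two (hstep ω))
  choose π hπ using hlim
  have hdist : ∀ k (ω : Ω), dist (ω.1 k : X) (π ω) ≤ 2 / 2 ^ k := fun k ω =>
    dist_le_of_le_geometric_two_of_tendsto (hstep ω) (hπ ω) k
  have hopen : ∀ k (i : X), IsOpen {ω : Ω | (ω.1 k : X) = i} := by
    intro k i
    have hc : Continuous fun ω : Ω => ω.1 k := (continuous_apply k).comp continuous_subtype_val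
    exact (isOpen_discrete {a : N k | (a : X) = i}).preimage hc
  have hsmall : ∀ ε : ℝ, 0 < ε → ∃ k : ℕ, 2 / 2 ^ k < ε := by
    intro ε hε
    obtain ⟨k, hk⟩ := exists_pow_lt_of_lt_one (half_pos hε) (by norm_num : (1 / 2 : ℝ) < 1)
    refine ⟨k, ?_⟩
    rw [one_div, inv_pow] at hk
    rw [div_eq_mul_inv]
    linarith
  refine ⟨Ω, inferInstance, hΩc, fun k ω => ω.1 k, π, ?_, ?_, ?_, hopen, ?_, hdist, ?_⟩
  · rw [Metric.continuous_iff']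
    intro ω ε hε
    obtain ⟨k, hk⟩ := hsmall (ε / 2) (half_pos hε)
    filter_upwards [(hopen k (ω.1 k)).mem_nhds rfl] with ω' hω'
    have h1 := hdist k ω
    have h2 := hdist k ω'
    have hω'' : (ω'.1 k : X) = ω.1 k := hω'
    rw [hω''] at h2
    have := dist_triangle_left (π ω') (π ω) (ω.1 k : X)
    linarith
  · apply Subset.antisymm
    · rintro _ ⟨ω, rfl⟩
      exact hK.isClosed.mem_of_tendsto (hπ ω) (Eventually.of_forall fun k => hNK k (ω.1 k).2)
    · intro x hx
      let C : ℕ → Set (∀ k, N k) := fun m =>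
        {ω | (∀ k < m, par k (ω (k + 1)) = ω k) ∧ ∀ k, dist (ω k : X) x ≤ 2 / 2 ^ k}
      have hne : ∀ m, ∀ s : N m, dist (s : X) x ≤ 2 / 2 ^ m → ∃ ω ∈ C m, ω m = s := by
        choose q hqN hq using fun k => hNcov k x hx
        have hq' : ∀ k, dist (q k) x ≤ 2 / 2 ^ k := fun k => by
          rw [dist_comm]
          exact (hq k).trans (by gcongr; norm_num)
        intro m
        induction m with
        | zero =>
          intro s hs
          refine ⟨Function.update (fun k => ⟨q k, hqN k⟩) 0 s, ⟨by simp, ?_⟩, by simp⟩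
          intro k
          rcases eq_or_ne k 0 with rfl | hk
          · simpa using hs
          · rw [Function.update_of_ne hk]
            exact hq' k
        | succ m ih =>
          intro s hs
          obtain ⟨ω, hω, hωm⟩ := ih (par m s) (by
            have h1 := hpar m s
            rw [dist_comm] at h1
            have h2 := dist_triangle (par m s : X) s x
            have h3 : (2 : ℝ) / 2 ^ (m + 1) = 1 / 2 ^ m := by
              rw [pow_succ]; field_simp
            have h4 : (2 : ℝ) / 2 ^ m = 1 / 2 ^ m + 1 / 2 ^ m := by ring
            linarith)
          refine ⟨Function.update ω (m + 1) s, ⟨?_, ?_⟩, by simp⟩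
          · intro k hk
            rcases (Nat.lt_succ_iff.1 hk).eq_or_lt with rfl | hk'
            · rw [Function.update_self, Function.update_of_ne (by omega), hωm]
            · rw [Function.update_of_ne (by omega), Function.update_of_ne (by omega)]
              exact hω.1 k hk'
          · intro k
            rcases eq_or_ne k (m + 1) with rfl | hk
            · simpa using hs
            · rw [Function.update_of_ne hk]
              exact hω.2 k
      have hCcl : ∀ m, IsClosed (C m) := by
        intro m
        have : C m = (⋂ k, ⋂ (_ : k < m), {ω | par k (ω (k + 1)) = ω k}) ∩
            ⋂ k, {ω | dist (ω k : X) x ≤ 2 / 2 ^ k} := by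
          ext ω
          simp [C]
        rw [this]
        refine (isClosed_iInter fun k => isClosed_iInter fun _ => isClosed_eq ?_
          (continuous_apply k)).inter (isClosed_iInter fun k => isClosed_le ?_ continuous_const)
        · exact continuous_of_discreteTopology.comp (continuous_apply (k + 1))
        · exact (continuous_subtype_val.comp (continuous_apply k)).dist continuous_const
      obtain ⟨ω, hω⟩ := IsCompact.nonempty_iInter_of_sequence_nonempty_isCompact_isClosed C
        (fun m ω h => ⟨fun k hk => h.1 k (by omega), h.2⟩)
        (fun m => by
          obtain ⟨y, hy, h⟩ := hNcov m x hx
          obtain ⟨ω, hω, _⟩ := hne m ⟨y, hy⟩ (by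
            rw [dist_comm]
            exact h.trans (by gcongr; norm_num))
          exact ⟨ω, hω⟩)
        (hCcl 0).isCompact hCcl
      rw [mem_iInter] at hω
      refine ⟨⟨ω, fun k => (hω (k + 1)).1 k (by omega)⟩, ?_⟩
      refine eq_of_forall_dist_le fun ε hε => ?_
      obtain ⟨k, hk⟩ := hsmall (ε / 2) (half_pos hε)
      have h1 := hdist k ⟨ω, fun k => (hω (k + 1)).1 k (by omega)⟩
      have h2 := (hω 0).2 k
      have h3 := dist_triangle_left (π ⟨ω, fun k => (hω (k + 1)).1 k (by omega)⟩) x (ω k : X)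
      simp only at h1
      linarith
  · intro k ω ω' h
    have h' : ω.1 (k + 1) = ω'.1 (k + 1) := Subtype.ext h
    show (ω.1 k : X) = ω'.1 k
    rw [← ω.2 k, ← ω'.2 k, h']
  · intro k
    refine (hNfin k).subset ?_
    rintro _ ⟨ω, rfl⟩
    exact (ω.1 k).2
  · rintro k _ ⟨ω, rfl⟩ _ ⟨ω', rfl⟩ hne
    exact hNsep k _ (ω.1 k).2 _ (ω'.1 k).2 hne

end Coding

section Comparison

theorem doubling_iterate {X : Type u} [MetricSpace X] [MeasurableSpace X] {μ : Measure X}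
    {Cd : ℝ≥0∞} (hdoub : IsDoubling μ Cd) (x : X) {r : ℝ} (hr : 0 < r) (n : ℕ) :
    μ (ball x (2 ^ n * r)) ≤ Cd ^ n * μ (ball x r) := by
  induction n with
  | zero => simp
  | succ n ih =>
    have h := (hdoub x (2 ^ n * r) (by positivity)).2.1
    rw [pow_succ', mul_assoc, pow_succ', mul_assoc]
    exact h.trans (by gcongr)

theorem codimHContent_le_finset {X : Type u} [MetricSpace X] [MeasurableSpace X] [Nonempty X]
    {μ : Measure X} {R : ℝ} (hR : 0 ≤ R) {A : Set X} (T : Finset (X × ℝ))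
    (hT : ∀ s ∈ T, s.2 ≤ R) (hA : A ⊆ ⋃ s ∈ T, ball s.1 s.2) :
    codimHContent μ R A ≤ ∑ s ∈ T, μ (ball s.1 s.2) / ENNReal.ofReal s.2 := by
  classical
  let x₀ : X := Classical.arbitrary X
  let c : ℕ → X × ℝ := fun i =>
    if h : i < T.card then (T.equivFin.symm ⟨i, h⟩ : X × ℝ) else (x₀, 0)
  have hc : ∀ i (h : i < T.card), c i = (T.equivFin.symm ⟨i, h⟩ : X × ℝ) := fun i h => dif_pos h
  have hc' : ∀ i, ¬ i < T.card → c i = (x₀, 0) := fun i h => dif_neg h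
  have hcov : A ⊆ ⋃ i, ball (c i).1 (c i).2 := by
    intro x hx
    have h := hA hx
    simp only [mem_iUnion] at h ⊢
    obtain ⟨s, hs, hxs⟩ := h
    refine ⟨T.equivFin ⟨s, hs⟩, ?_⟩
    rw [hc _ (T.equivFin ⟨s, hs⟩).2]
    simpa using hxs
  have hcR : ∀ i, (c i).2 ≤ R := by
    intro i
    by_cases h : i < T.card
    · rw [hc i h]
      exact hT _ (T.equivFin.symm ⟨i, h⟩).2
    · rw [hc' i h]
      exact hR
  refine iInf_le_of_le c (iInf_le_of_le hcov (iInf_le_of_le hcR (le_of_eq ?_)))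
  rw [tsum_eq_sum (s := Finset.range T.card)]
  · rw [Finset.sum_range, ← Finset.sum_coe_sort T, ← T.equivFin.symm.sum_comp]
    refine Finset.sum_congr rfl fun i _ => ?_
    rw [hc i i.2]
  · intro i hi
    rw [hc' i (by simpa using hi)]
    simp

variable {X : Type u} [MetricSpace X] [MeasurableSpace X]

/-- The weights of the nodes. -/
def nodeWeight (μ : Measure X) (s : ℕ × X) : ℝ≥0∞ :=
  μ (ball s.2 (1 / 2 ^ s.1)) / ENNReal.ofReal (1 / 2 ^ s.1)

theorem content_le_treeH [Nonempty X] {μ : Measure X} {Cd : ℝ≥0∞} (hCd : 1 ≤ Cd) (hCt : Cd ≠ ⊤)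
    (hdoub : IsDoubling μ Cd) {Ω : Type*} {p : ℕ → Ω → X} {π : Ω → X}
    (hdist : ∀ k x, dist (p k x) (π x) ≤ 2 / 2 ^ k) {m : ℕ} {R : ℝ} (hmR : 4 / 2 ^ m ≤ R)
    (F : Set Ω) :
    codimHContent μ R (π '' F) ≤ Cd ^ 2 * treeH p (nodeWeight μ) m F := by
  classical
  have hC0 : Cd ^ 2 ≠ 0 := pow_ne_zero _ (zero_lt_one.trans_le hCd).ne'
  have hCt' : Cd ^ 2 ≠ ⊤ := ENNReal.pow_ne_top hCt
  rw [← ENNReal.div_le_iff' hC0 hCt']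
  refine le_treeH fun S h1 h2 => ENNReal.div_le_of_le_mul' ?_
  let g : ℕ × X → X × ℝ := fun s => (s.2, 4 / 2 ^ s.1)
  have hR : 0 ≤ R := le_trans (by positivity) hmR
  refine (codimHContent_le_finset hR (S.image g) ?_ ?_).trans ?_
  · intro s hs
    obtain ⟨s', hs', rfl⟩ := Finset.mem_image.1 hs
    refine le_trans ?_ hmR
    have := h1 s' hs'
    simp only [g]
    gcongr
    norm_num
  · rintro _ ⟨x, hx, rfl⟩
    have h3 := h2 hx
    simp only [mem_iUnion] at h3 ⊢
    obtain ⟨s, hs, hxs⟩ := h3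
    refine ⟨g s, Finset.mem_image_of_mem _ hs, ?_⟩
    have h4 := hdist s.1 x
    have h5 : p s.1 x = s.2 := hxs
    rw [h5, dist_comm] at h4
    refine mem_ball.2 (h4.trans_lt ?_)
    simp only [g]
    gcongr
    norm_num
  · have hginj : Set.InjOn g S := by
      rintro ⟨k, a⟩ _ ⟨l, b⟩ _ h
      simp only [g, Prod.mk.injEq] at h
      obtain ⟨rfl, h⟩ := h
      have h' : (2 : ℝ) ^ k = 2 ^ l := by
        field_simp at h
        exact h.symm
      rw [pow_right_injective₀ (by norm_num) (by norm_num) h']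
    rw [Finset.sum_image hginj, Finset.mul_sum]
    refine Finset.sum_le_sum fun s _ => ?_
    have h6 := doubling_iterate hdoub s.2 (show (0 : ℝ) < 1 / 2 ^ s.1 by positivity) 2
    have h7 : (2 : ℝ) ^ 2 * (1 / 2 ^ s.1) = 4 / 2 ^ s.1 := by ring
    rw [h7] at h6
    simp only [g, nodeWeight]
    rw [← mul_div_assoc]
    refine ENNReal.div_le_div h6 (ENNReal.ofReal_le_ofReal ?_)
    gcongr
    norm_num

theorem ball_cover [OpensMeasurableSpace X] {μ : Measure X} {Cd : ℝ≥0∞}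
    (hdoub : IsDoubling μ Cd) {Ω : Type*} {p : ℕ → Ω → X} {π : Ω → X}
    (hfin : ∀ k, (range (p k)).Finite)
    (hdist : ∀ k x, dist (p k x) (π x) ≤ 2 / 2 ^ k)
    (hsep : ∀ k, ∀ a ∈ range (p k), ∀ b ∈ range (p k), a ≠ b → 1 / 2 ^ k ≤ dist a b)
    {m : ℕ} (x : X) {r : ℝ} (hr : r ≤ 1 / 2 ^ m) :
    ∃ S : Finset (ℕ × X), (∀ s ∈ S, m ≤ s.1) ∧ π ⁻¹' ball x r ⊆ ⋃ s ∈ S, treeCyl p s ∧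
      ∑ s ∈ S, nodeWeight μ s ≤ Cd ^ 4 * (μ (ball x r) / ENNReal.ofReal r) := by
  classical
  rcases le_or_gt r 0 with hr0 | hr0
  · refine ⟨∅, by simp, ?_, by simp⟩
    rw [ball_eq_empty.2 hr0]
    simp
  obtain ⟨k, hk1, hk2⟩ := exists_nat_pow_near_of_lt_one hr0
    (hr.trans (by rw [div_le_one (by positivity)]; exact one_le_pow₀ (by norm_num)))
    (by norm_num : (0 : ℝ) < 1 / 2) (by norm_num)
  have hmk : m ≤ k := by
    by_contra! hlt
    have h1 : ((1 : ℝ) / 2) ^ m ≤ (1 / 2) ^ (k + 1) :=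
      pow_le_pow_of_le_one (by norm_num) (by norm_num) hlt
    rw [one_div_pow (2 : ℝ) m] at h1
    linarith
  rw [pow_succ] at hk1
  rw [one_div_pow] at hk1 hk2
  set ρ : ℝ := 1 / 2 ^ k with hρ
  have hρ0 : 0 < ρ := by positivity
  let Q : Finset X := (hfin k).toFinset.filter fun n => dist n x < 5 * r
  refine ⟨Q.image fun n => (k, n), ?_, ?_, ?_⟩
  · intro s hs
    obtain ⟨n, _, rfl⟩ := Finset.mem_image.1 hs
    exact hmk
  · intro y hy
    have hy' : dist (π y) x < r := hy
    have h1 := hdist k y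
    have h2 : (2 : ℝ) / 2 ^ k = 2 * ρ := by rw [hρ]; ring
    have h3 := dist_triangle (p k y) (π y) x
    simp only [mem_iUnion]
    refine ⟨(k, p k y), Finset.mem_image_of_mem _ (Finset.mem_filter.2 ⟨by simp, ?_⟩), rfl⟩
    linarith
  · rw [Finset.sum_image (by intro a _ b _ h; exact (Prod.mk.inj h).2)]
    have hw : ∀ n, nodeWeight μ (k, n) = μ (ball n ρ) * (ENNReal.ofReal ρ)⁻¹ := fun n => by
      rw [nodeWeight, div_eq_mul_inv]
    simp only [hw]
    rw [← Finset.sum_mul]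
    have hdisj : (Q : Set X).PairwiseDisjoint fun n => ball n (ρ / 2) := by
      intro a ha b hb hab
      refine ball_disjoint_ball ?_
      rw [add_halves]
      have ha' := (Finset.mem_filter.1 ha).1
      have hb' := (Finset.mem_filter.1 hb).1
      rw [Set.Finite.mem_toFinset] at ha' hb'
      exact hsep k a ha' b hb' hab
    have hsum : ∑ n ∈ Q, μ (ball n ρ) ≤ Cd ^ 4 * μ (ball x r) := by
      calc ∑ n ∈ Q, μ (ball n ρ) ≤ ∑ n ∈ Q, Cd * μ (ball n (ρ / 2)) := by
            refine Finset.sum_le_sum fun n _ => ?_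
            have := (hdoub n (ρ / 2) (by positivity)).2.1
            rwa [mul_div_cancel₀ _ two_ne_zero] at this
        _ = Cd * μ (⋃ n ∈ Q, ball n (ρ / 2)) := by
            rw [← Finset.mul_sum, measure_biUnion_finset hdisj fun n _ => measurableSet_ball]
        _ ≤ Cd * μ (ball x (2 ^ 3 * r)) := by
            gcongr
            refine iUnion₂_subset fun n hn => ball_subset_ball' ?_
            have := (Finset.mem_filter.1 hn).2
            linarith
        _ ≤ Cd * (Cd ^ 3 * μ (ball x r)) := by
            gcongr
            exact doubling_iterate hdoub x hr0 3
        _ = Cd ^ 4 * μ (ball x r) := by ring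
    rw [div_eq_mul_inv, ← mul_assoc]
    gcongr

theorem treeH_le_content [OpensMeasurableSpace X] {μ : Measure X} {Cd : ℝ≥0∞} (hCd : 1 ≤ Cd)
    (hCt : Cd ≠ ⊤)
    (hdoub : IsDoubling μ Cd) {Ω : Type*} [TopologicalSpace Ω] {p : ℕ → Ω → X} {π : Ω → X}
    (hπ : Continuous π)
    (hfin : ∀ k, (range (p k)).Finite)
    (hdist : ∀ k x, dist (p k x) (π x) ≤ 2 / 2 ^ k)
    (hsep : ∀ k, ∀ a ∈ range (p k), ∀ b ∈ range (p k), a ≠ b → 1 / 2 ^ k ≤ dist a b)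
    {m : ℕ} {R : ℝ} (hR : R ≤ 1 / 2 ^ m) {F : Set Ω} (hF : IsCompact F) :
    treeH p (nodeWeight μ) m F ≤ Cd ^ 4 * codimHContent μ R (π '' F) := by
  classical
  have hC0 : Cd ^ 4 ≠ 0 := pow_ne_zero _ (zero_lt_one.trans_le hCd).ne'
  have hCt' : Cd ^ 4 ≠ ⊤ := ENNReal.pow_ne_top hCt
  rw [← ENNReal.div_le_iff' hC0 hCt']
  refine le_iInf fun c => le_iInf fun h1 => le_iInf fun h2 => ENNReal.div_le_of_le_mul' ?_
  choose S hS1 hS2 hS3 using fun i => ball_cover (μ := μ) hdoub hfin hdist hsep (c i).1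
    ((h2 i).trans hR)
  obtain ⟨t, ht⟩ := hF.elim_finite_subcover (fun i => π ⁻¹' ball (c i).1 (c i).2)
    (fun i => isOpen_ball.preimage hπ) (by
      rw [← preimage_iUnion]
      exact image_subset_iff.1 h1)
  calc treeH p (nodeWeight μ) m F
      ≤ treeH p (nodeWeight μ) m (⋃ i ∈ t, π ⁻¹' ball (c i).1 (c i).2) := treeH_mono ht
    _ ≤ ∑ i ∈ t, treeH p (nodeWeight μ) m (π ⁻¹' ball (c i).1 (c i).2) := treeH_biUnion _ _ _
    _ ≤ ∑ i ∈ t, Cd ^ 4 * (μ (ball (c i).1 (c i).2) / ENNReal.ofReal (c i).2) :=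
        Finset.sum_le_sum fun i _ => (treeH_le (S i) (hS1 i) (hS2 i)).trans (hS3 i)
    _ = Cd ^ 4 * ∑ i ∈ t, (μ (ball (c i).1 (c i).2) / ENNReal.ofReal (c i).2) :=
        (Finset.mul_sum _ _ _).symm
    _ ≤ _ := by
        gcongr
        exact ENNReal.sum_le_tsum _

theorem codimH_exists_compact_subset {X : Type u} [MetricSpace X] [CompleteSpace X] [Nonempty X]
    [MeasurableSpace X] [BorelSpace X] (μ : Measure X)
    (Cd : ℝ≥0∞) (hCd : 1 ≤ Cd) (hdoub : IsDoubling μ Cd)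
    (K : Set X) (hK : IsCompact K) (hpt : ∀ x ∈ K, codimH μ {x} = 0) (htop : codimH μ K = ⊤)
    (M : ℝ≥0∞) (hM : M < ⊤) :
    ∃ K₀ : Set X, K₀ ⊆ K ∧ IsCompact K₀ ∧ M < codimH μ K₀ ∧ codimH μ K₀ < ⊤ := by
  have hball : ∀ (x : X) (r : ℝ), 0 < r → 0 < μ (ball x r) ∧ μ (ball x r) < ⊤ := by
    intro x r hr
    have h1 := (hdoub x (r / 2) (half_pos hr)).1
    rw [mul_div_cancel₀ _ two_ne_zero] at h1
    refine ⟨h1, lt_of_le_of_lt ?_ (hdoub x r hr).2.2⟩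
    exact le_mul_of_one_le_left bot_le hCd
  have hCt : Cd ≠ ⊤ := by
    rintro rfl
    obtain ⟨x⟩ := ‹Nonempty X›
    have h := (hdoub x 1 one_pos).2.2
    rw [ENNReal.top_mul (hball x 1 one_pos).1.ne'] at h
    exact lt_irrefl _ h
  have hC0 : Cd ≠ 0 := (zero_lt_one.trans_le hCd).ne'
  obtain ⟨Ω, _, _, p, π, hπ, hrange, hp, hopen, hfin, hdist, hsep⟩ := exists_coding hK
  have hA := fun (m : ℕ) (R : ℝ) (h : 4 / 2 ^ m ≤ R) (F : Set Ω) =>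
    content_le_treeH hCd hCt hdoub hdist h F
  have hB := fun (m : ℕ) (F : Set Ω) (hF : IsCompact F) =>
    treeH_le_content hCd hCt hdoub hπ hfin hdist hsep (le_refl (1 / 2 ^ m : ℝ)) hF
  have hle : ∀ (R : ℝ) (A : Set X), 0 < R → codimHContent μ R A ≤ codimH μ A := fun R A hR =>
    le_iSup₂_of_le R hR le_rfl
  have hsmall : ∀ x, ∀ ε : ℝ≥0∞, 0 < ε → ∀ m, ∃ k ≥ m, nodeWeight μ (k, p k x) < ε := by
    intro x ε hε m
    have h1 := hB m {x} isCompact_singleton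
    rw [image_singleton] at h1
    have h2 := hle (1 / 2 ^ m) {π x} (by positivity)
    rw [hpt (π x) (hrange ▸ mem_range_self x)] at h2
    rw [le_antisymm h2 bot_le, mul_zero] at h1
    obtain ⟨S, a1, a2, a3⟩ := exists_of_treeH_lt (h1.trans_lt hε)
    have h3 := a2 (mem_singleton x)
    simp only [mem_iUnion] at h3
    obtain ⟨⟨k, i⟩, hs, hxs⟩ := h3
    have hxs' : p k x = i := hxs
    subst hxs'
    exact ⟨k, a1 _ hs, (Finset.single_le_sum (f := nodeWeight μ) (fun _ _ => bot_le) hs).trans_lt a3⟩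
  have hbig : ∃ R : ℝ, 0 < R ∧ Cd ^ 2 * (Cd ^ 4 * M) < codimHContent μ R K := by
    have h : Cd ^ 2 * (Cd ^ 4 * M) < codimH μ K := by
      rw [htop]
      exact ENNReal.mul_lt_top (ENNReal.pow_lt_top hCt.lt_top)
        (ENNReal.mul_lt_top (ENNReal.pow_lt_top hCt.lt_top) hM)
    rw [codimH] at h
    simp only [lt_iSup_iff] at h
    obtain ⟨R, hR, h⟩ := h
    exact ⟨R, hR, h⟩
  have hex : ∀ R : ℝ, 0 < R → ∃ m : ℕ, 4 / 2 ^ m ≤ R := by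
    intro R hR
    obtain ⟨k, hk⟩ := exists_pow_lt_of_lt_one (show 0 < R / 4 by positivity)
      (by norm_num : (1 / 2 : ℝ) < 1)
    refine ⟨k, ?_⟩
    rw [one_div, inv_pow] at hk
    rw [div_eq_mul_inv]
    linarith
  obtain ⟨R, hR, hbig⟩ := hbig
  obtain ⟨m, hm⟩ := hex R hR
  have h1 : Cd ^ 4 * M < treeH p (nodeWeight μ) m univ := by
    have h := hA m R hm univ
    rw [image_univ, hrange] at h
    exact lt_of_mul_lt_mul_left' (hbig.trans_le h)
  obtain ⟨F, hFcl, hF1, hF2⟩ := tree_main hp hopen hfin hsmall m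
  have hafin : treeH p (nodeWeight μ) m univ < ⊤ := by
    refine (treeH_le (({m} : Finset ℕ) ×ˢ (hfin m).toFinset)
      (fun s hs => (Finset.mem_singleton.1 (Finset.mem_product.1 hs).1).ge) ?_).trans_lt ?_
    · intro x _
      simp only [mem_iUnion]
      exact ⟨(m, p m x), by simp, rfl⟩
    · refine ENNReal.sum_lt_top.2 fun s _ => ?_
      refine ENNReal.div_lt_top (hball _ _ (by positivity)).2.ne ?_
      rw [Ne, ENNReal.ofReal_eq_zero, not_le]
      positivity
  refine ⟨π '' F, ?_, hFcl.isCompact.image hπ, ?_, ?_⟩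
  · rw [← hrange]
    exact image_subset_range _ _
  · have h2 := hB m F hFcl.isCompact
    have h3 := hle (1 / 2 ^ m) (π '' F) (by positivity)
    exact (lt_of_mul_lt_mul_left' (h1.trans_le (hF1.trans h2))).trans_le h3
  · refine lt_of_le_of_lt (b := Cd ^ 2 * (treeH p (nodeWeight μ) m univ + 1)) ?_ ?_
    · refine iSup₂_le fun R hR => ?_
      obtain ⟨k, hk⟩ := hex R hR
      exact (hA k R hk F).trans (by gcongr; exact hF2 k)
    · exact ENNReal.mul_lt_top (ENNReal.pow_lt_top hCt.lt_top)
        (ENNReal.add_lt_top.2 ⟨hafin, ENNReal.one_lt_top⟩)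

end Comparison

/-- existence of compact subsets of finite codimension one
Hausdorff measure. -/
theorem codimH_eq_iSup_compact_subsets {X : Type u} [MetricSpace X] [CompleteSpace X] [Nontrivial X]
    [MeasurableSpace X] [BorelSpace X] (μ : Measure X)
    (Cd : ℝ≥0∞) (hCd : 1 ≤ Cd) (hdoub : IsDoubling μ Cd)
    (K : Set X) (hK : IsCompact K) (hpt : ∀ x ∈ K, codimH μ {x} = 0) :
    (codimH μ K =
      ⨆ (K₀ : Set X) (_ : K₀ ⊆ K) (_ : IsCompact K₀) (_ : codimH μ K₀ < ⊤),
        codimH μ K₀) ∧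
    (codimH μ K = ⊤ → ∀ M : ℝ≥0∞, 0 < M → M < ⊤ →
      ∃ K₀ : Set X, K₀ ⊆ K ∧ IsCompact K₀ ∧ M < codimH μ K₀ ∧ codimH μ K₀ < ⊤) := by
  have key := codimH_exists_compact_subset μ Cd hCd hdoub K hK hpt
  refine ⟨le_antisymm ?_ ?_, fun htop M _ hM => key htop M hM⟩
  · rcases eq_or_ne (codimH μ K) ⊤ with htop | hfin
    · rw [htop]
      refine le_of_forall_lt fun M hM => ?_
      obtain ⟨K₀, h1, h2, h3, h4⟩ := key htop M hM
      exact h3.trans_le (le_iSup_of_le K₀ (le_iSup_of_le h1 (le_iSup_of_le h2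
        (le_iSup_of_le h4 le_rfl))))
    · exact le_iSup_of_le K (le_iSup_of_le subset_rfl (le_iSup_of_le hK
        (le_iSup_of_le hfin.lt_top le_rfl)))
  · refine iSup_le fun K₀ => iSup_le fun h1 => iSup_le fun _ => iSup_le fun _ => ?_
    refine iSup₂_mono fun R _ => ?_
    exact le_iInf fun c => le_iInf fun hc => le_iInf fun hR =>
      iInf_le_of_le c (iInf_le_of_le (h1.trans hc) (iInf_le_of_le hR le_rfl))

end
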